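/- Let l > 0 and let u be the vortex map on B_l. Let (u_k) be Lipschitz maps from B_l into the closed unit disc of ℝ² with sup_k ∫_{B_l} |∇u_k| dx < ∞. Let (λ_k) ⊂ (0, 2) be strictly decreasing with λ_k → 0, ℋ¹({x ∈ B_l \ {0} : |u_k(x) − u(x)| = λ_k}) < ∞ for every k, and λ_k · ℋ¹({x ∈ B_l \ {0} : |u_k(x) − u(x)| = λ_k}) → 0. Set D_k := {x ∈ B_l \ {0} : |u_k(x) − u(x)| > λ_k}, and let ζ : B_l → [0, 1] be measurable with ∫_{D_k} g dx → ∫_{B_l} ζ g dx for every g ∈ L¹(B_l). Then for every smooth compactly supported φ : B_l × ℝ² → ℝ: (a) ∫_{B_l \ D_k} φ(x, u_k(x)) dx → ∫_{B_l} φ(x, u(x)) (1 − ζ(x)) dx; and (b) for all i, j ∈ {1, 2}, ∫_{B_l \ D_k} φ(x, u_k(x)) ∂_i (u_k)_j(x) dx → ∫_{B_l} φ(x, u(x)) ∂_i u_j(x) (1 − ζ(x)) dx, where ∂_i (u_k)_j are the a.e.-defined partial derivatives. -/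

import Mathlib

/-! Let `U_k = {|u_k - u| < λ_k}`; up to a null set it is `B_l \ D_k`. For a linear form `ℓ` on the
target the product rule gives
`φ(x, u_k) ℓ(∂_i u_k) - φ(x, u) ℓ(∂_i u) = ∂_i (φ(x, u) ℓ(u_k - u)) + O(λ_k (|∇u_k| + |∇u| + 1))`
on `U_k`, so the error tends to `0` in `L¹` because the gradients are bounded in `L¹`. The function
under `∂_i` is `O(λ_k)` on `U_k`, so the integral of its derivative is at most
`O(λ_k) ℋ^(d-1)(∂U_k)`, which tends to `0` as well. Hence `u_k` can be replaced by `u`, and the weak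
convergence of `D_k` gives the limit.

As `u_k` is merely Lipschitz, `∂U_k` has no regularity beyond its finite measure, and the boundary
term is estimated by slicing: on a line parallel to a coordinate axis the integral of a derivative
is at most twice the supremum of the function times the number of boundary points, and Eilenberg's
inequality bounds the integral of that number over all such lines by the Hausdorff measure of the
boundary. The argument is insensitive to the dimension and to the limit map; for the vortex it only
needs `|∇u| ≤ 2 / |x|`, which is integrable in the plane. -/

open MeasureTheory Filter Metric Topology
open scoped ENNReal NNReal

noncomputable section

abbrev V2 : Type := EuclideanSpace ℝ (Fin 2)

/-- Squared Frobenius norm of (the matrix of) a continuous linear map on `ℝ²`. -/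
def frobSq (L : V2 →L[ℝ] V2) : ℝ :=
  ∑ i : Fin 2, ∑ j : Fin 2, (L (EuclideanSpace.single j 1) i) ^ 2

/-- Determinant of (the matrix of) a continuous linear map on `ℝ²`. -/
def detJ (L : V2 →L[ℝ] V2) : ℝ :=
  L (EuclideanSpace.single 0 1) 0 * L (EuclideanSpace.single 1 1) 1 -
    L (EuclideanSpace.single 1 1) 0 * L (EuclideanSpace.single 0 1) 1

/-- The vortex map `x ↦ x / |x|` (equal to `0` at the origin). -/
def vortex (x : V2) : V2 := ‖x‖⁻¹ • x

/-- The area integrand `√(1 + |∇v|² + (det ∇v)²)`. -/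
def areaIntegrand (v : V2 → V2) (x : V2) : ℝ :=
  Real.sqrt (1 + frobSq (fderiv ℝ v x) + detJ (fderiv ℝ v x) ^ 2)

/-- Area of the graph of `v` over the set `E`. -/
def graphArea (v : V2 → V2) (E : Set V2) : ℝ≥0∞ :=
  ∫⁻ x in E, ENNReal.ofReal (areaIntegrand v x)

/-- `∫_{B_l} √(1 + |∇u|²) dx` for the vortex map `u`. -/
def vortexGradArea (l : ℝ) : ℝ≥0∞ :=
  ∫⁻ x in ball (0 : V2) l, ENNReal.ofReal (Real.sqrt (1 + frobSq (fderiv ℝ vortex x)))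

/-- The `L¹`-relaxed area of the graph of the vortex map over `B_l`:
the infimum of `liminf_k 𝒜(v_k, B_l)` over all sequences `(v_k)` of maps that are
`C¹` on `B_l` and converge to the vortex map in `L¹(B_l, ℝ²)`. -/
def relaxedArea (l : ℝ) : ℝ≥0∞ :=
  sInf { a : ℝ≥0∞ | ∃ v : ℕ → V2 → V2,
    (∀ k, ContDiffOn ℝ 1 (v k) (ball (0 : V2) l)) ∧
    Tendsto (fun k => ∫⁻ x in ball (0 : V2) l, ENNReal.ofReal ‖v k x - vortex x‖)
      atTop (𝓝 0) ∧
    a = Filter.liminf (fun k => graphArea (v k) (ball (0 : V2) l)) atTop }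

section Eilenberg

open MeasurableSpace

theorem eventually_countablePartitionSet_ne {α : Type*} [MeasurableSpace α]
    [CountablyGenerated α] [SeparatesPoints α] {x y : α} (hxy : x ≠ y) :
    ∀ᶠ n in atTop, countablePartitionSet n x ≠ countablePartitionSet n y := by
  obtain ⟨m, s, hs, hsep⟩ : ∃ m, ∃ s ∈ countablePartition α m, ¬(x ∈ s ↔ y ∈ s) := by
    by_contra! h
    have hsep : @SeparatesPoints α (generateFrom (⋃ n, countablePartition α n)) := by
      rwa [generateFrom_iUnion_countablePartition]
    exact hxy <| separating_of_generateFrom _ x y fun s hs ↦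
      let ⟨m, hm⟩ := Set.mem_iUnion.1 hs
      h m s hm
  have hmono : Monotone fun n ↦ generateFrom (countablePartition α n) :=
    monotone_nat_of_le_succ (generateFrom_countablePartition_le_succ α)
  filter_upwards [eventually_ge_atTop m] with n hmn heq
  obtain ⟨S, hS, rfl⟩ := (measurableSet_generateFrom_countablePartition_iff n s).1
    (hmono hmn s (measurableSet_generateFrom hs))
  have hmem (z : α) : z ∈ ⋃₀ (S : Set (Set α)) ↔ countablePartitionSet n z ∈ S :=
    ⟨fun ⟨A, hA, hz⟩ ↦ countablePartitionSet_of_mem (hS hA) hz ▸ hA,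
      fun h ↦ ⟨_, h, mem_countablePartitionSet n z⟩⟩
  exact hsep (by rw [hmem, hmem, heq])

theorem eventually_injOn_countablePartitionSet {α : Type*} [MeasurableSpace α]
    [CountablyGenerated α] [SeparatesPoints α] {s : Set α} (hs : s.Finite) :
    ∀ᶠ n in atTop, s.InjOn (countablePartitionSet n) := by
  have h : ∀ᶠ n in atTop, ∀ x ∈ s, ∀ y ∈ s, x ≠ y →
      countablePartitionSet n x ≠ countablePartitionSet n y := by
    simp only [hs.eventually_all, eventually_imp_distrib_left]
    exact fun x _ y _ ↦ eventually_countablePartitionSet_ne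
  filter_upwards [h] with n hn x hx y hy hxy
  exact of_not_not fun hne ↦ hn x hx y hy hne hxy

theorem sum_measure_inter_countablePartition {X : Type*} [MeasurableSpace X]
    [CountablyGenerated X] (μ : Measure X) (E : Set X) (n : ℕ) :
    ∑ A ∈ (finite_countablePartition X n).toFinset, μ (A ∩ E) = μ E := by
  have hmeas (A : Set X) (hA : A ∈ (finite_countablePartition X n).toFinset) : MeasurableSet A :=
    measurableSet_countablePartition n (by simpa using hA)
  calc ∑ A ∈ (finite_countablePartition X n).toFinset, μ (A ∩ E)
      = ∑ A ∈ (finite_countablePartition X n).toFinset, μ.restrict E A :=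
        Finset.sum_congr rfl fun A hA ↦ (Measure.restrict_apply (hmeas A hA)).symm
    _ = μ.restrict E (⋃₀ countablePartition X n) := by
        rw [Set.sUnion_eq_biUnion, ← measure_biUnion_finset _ hmeas]
        · simp
        · intro A hA B hB hne
          exact disjoint_countablePartition (by simpa using hA) (by simpa using hB) hne
    _ = μ E := by
        rw [sUnion_countablePartition, Measure.restrict_apply_univ]

theorem eventually_card_le_sum_indicator {X Y : Type*} [MeasurableSpace X] [CountablyGenerated X]
    [SeparatesPoints X] {f : X → Y} {E : Set X} {y : Y} {T : Set X → Set Y}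
    (hT : ∀ A, f '' (A ∩ E) ⊆ T A) (F : Finset ↥(E ∩ f ⁻¹' {y})) :
    ∀ᶠ n in atTop, (F.card : ℝ≥0∞) ≤
      ∑ A ∈ (finite_countablePartition X n).toFinset, (T A).indicator 1 y := by
  classical
  filter_upwards [eventually_injOn_countablePartitionSet
    (F.finite_toSet.image Subtype.val)] with n hn
  let c (x : ↥(E ∩ f ⁻¹' {y})) : Set X := countablePartitionSet n x
  have hc : Set.InjOn c F := fun a ha b hb hab ↦
    Subtype.ext <| hn (Set.mem_image_of_mem _ ha) (Set.mem_image_of_mem _ hb) hab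
  have hcT (x : ↥(E ∩ f ⁻¹' {y})) : y ∈ T (c x) :=
    hT _ ⟨x, ⟨mem_countablePartitionSet n _, x.2.1⟩, x.2.2⟩
  calc (F.card : ℝ≥0∞) = ∑ A ∈ F.image c, (T A).indicator 1 y := by
        rw [Finset.sum_image hc]
        simp [hcT]
    _ ≤ ∑ A ∈ (finite_countablePartition X n).toFinset, (T A).indicator 1 y :=
        Finset.sum_le_sum_of_subset fun A hA ↦ by
          obtain ⟨x, -, rfl⟩ := Finset.mem_image.1 hA
          simp [c, countablePartitionSet_mem]

variable {X Y : Type*} [EMetricSpace X] [MeasurableSpace X] [BorelSpace X]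
  [SecondCountableTopology X] [EMetricSpace Y] [MeasurableSpace Y] [BorelSpace Y]

/- The partitions eventually separate the points of any finite part of a fibre, so the liminf of the
number of pieces whose image contains `y` is at least the cardinality of the fibre over `y`. The
images need not be measurable, hence the measurable hulls and the majorant `N`. -/
theorem exists_measurable_encard_fiber_le {f : X → Y} {K : ℝ≥0} {E : Set X}
    (hf : LipschitzOnWith K f E) {d : ℝ} (hd : 0 ≤ d) :
    ∃ N : Y → ℝ≥0∞, Measurable N ∧ (∀ y, ((E ∩ f ⁻¹' {y}).encard : ℝ≥0∞) ≤ N y) ∧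
      ∫⁻ y, N y ∂μH[d] ≤ (K : ℝ≥0∞) ^ d * μH[d] E := by
  let P (n : ℕ) := (finite_countablePartition X n).toFinset
  let T (A : Set X) : Set Y := toMeasurable μH[d] (f '' (A ∩ E))
  let N (n : ℕ) (y : Y) : ℝ≥0∞ := ∑ A ∈ P n, (T A).indicator 1 y
  have hN (n : ℕ) : Measurable (N n) := Finset.measurable_fun_sum _ fun A _ ↦
    measurable_one.indicator (measurableSet_toMeasurable _ _)
  have hint (n : ℕ) : ∫⁻ y, N n y ∂μH[d] ≤ (K : ℝ≥0∞) ^ d * μH[d] E := calc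
    ∫⁻ y, N n y ∂μH[d] = ∑ A ∈ P n, μH[d] (f '' (A ∩ E)) := by
        rw [lintegral_finsetSum _ fun A _ ↦
          measurable_one.indicator (measurableSet_toMeasurable _ _)]
        simp only [lintegral_indicator_one (measurableSet_toMeasurable _ _),
          measure_toMeasurable]
    _ ≤ ∑ A ∈ P n, (K : ℝ≥0∞) ^ d * μH[d] (A ∩ E) := Finset.sum_le_sum fun A _ ↦
        (hf.mono Set.inter_subset_right).hausdorffMeasure_image_le hd
    _ = (K : ℝ≥0∞) ^ d * μH[d] E := by
        rw [← Finset.mul_sum, sum_measure_inter_countablePartition]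
  have hcard (y : Y) (F : Finset ↥(E ∩ f ⁻¹' {y})) : ∀ᶠ n in atTop, (F.card : ℝ≥0∞) ≤ N n y :=
    eventually_card_le_sum_indicator (fun _ ↦ subset_toMeasurable _ _) F
  refine ⟨fun y ↦ liminf (fun n ↦ N n y) atTop, .liminf hN, fun y ↦ ?_, ?_⟩
  · rw [← ENNReal.tsum_set_one, ENNReal.tsum_eq_iSup_sum]
    exact iSup_le fun F ↦ by
      simpa using le_liminf_of_le (by isBoundedDefault) (hcard y F)
  · exact (lintegral_liminf_le hN).trans (liminf_le_of_le (by isBoundedDefault) fun b hb ↦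
      let ⟨n, hn⟩ := hb.exists
      hn.trans (hint n))

end Eilenberg

section RealLine

theorem subset_or_disjoint_of_disjoint_frontier {X : Type*} [TopologicalSpace X] {s U : Set X}
    (hs : IsPreconnected s) (hU : IsOpen U) (hsU : Disjoint s (frontier U)) :
    s ⊆ U ∨ Disjoint s U := by
  rw [hU.frontier_eq] at hsU
  refine (isPreconnected_iff_subset_of_disjoint.1 hs U (closure U)ᶜ hU isClosed_closure.isOpen_compl
    (fun x hx ↦ ?_) ?_).imp_right fun h ↦
      Set.disjoint_left.2 fun x hx hxU ↦ h hx (subset_closure hxU)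
  · by_contra hx'
    simp only [Set.mem_union, Set.mem_compl_iff, not_or, not_not] at hx'
    exact Set.disjoint_left.1 hsU hx ⟨hx'.2, hx'.1⟩
  · exact Set.eq_empty_of_forall_notMem fun x hx ↦ hx.2.2 (subset_closure hx.2.1)

theorem abs_integral_deriv_Ioo_le {h : ℝ → ℝ} {a b C : ℝ} (hab : a < b)
    (hh : LocallyLipschitzOn (Set.Ioo a b) h) (hC : ∀ t ∈ Set.Ioo a b, |h t| ≤ C)
    (hint : IntegrableOn (deriv h) (Set.Ioo a b)) :
    |∫ t in Set.Ioo a b, deriv h t| ≤ 2 * C := by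
  obtain ⟨m, ham, hmb⟩ := exists_between hab
  obtain ⟨v, -, hv, hva⟩ := exists_seq_strictAnti_tendsto' ham
  obtain ⟨w, -, hw, hwb⟩ := exists_seq_strictMono_tendsto' hmb
  have hle (n : ℕ) : v n ≤ w n := (hv n).2.le.trans (hw n).1.le
  have hftc (n : ℕ) : ∫ t in Set.Ioc (v n) (w n), deriv h t ∂volume.restrict (Set.Ioo a b)
      = h (w n) - h (v n) := by
    have hsub : Set.Icc (v n) (w n) ⊆ Set.Ioo a b := Set.Icc_subset_Ioo (hv n).1 (hw n).2
    obtain ⟨K, hK⟩ := (hh.mono hsub).exists_lipschitzOnWith_of_compact isCompact_Icc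
    rw [← Set.uIcc_of_le (hle n)] at hK
    rw [Measure.restrict_restrict_of_subset (Set.Ioc_subset_Icc_self.trans hsub),
      ← intervalIntegral.integral_of_le (hle n),
      hK.absolutelyContinuousOnInterval.integral_deriv_eq_sub]
  refine le_of_tendsto ((aecover_Ioo_of_Ioc hva hwb).integral_tendsto_of_countably_generated
    hint).abs (.of_forall fun n ↦ ?_)
  rw [hftc]
  linarith [abs_sub (h (w n)) (h (v n)), hC (w n) ⟨ham.trans (hw n).1, (hw n).2⟩,
    hC (v n) ⟨(hv n).1, (hv n).2.trans hmb⟩]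

theorem abs_integral_deriv_inter_Iio_le_add {U : Set ℝ} {h : ℝ → ℝ} {C d b : ℝ} (hU : IsOpen U)
    (hh : LocallyLipschitzOn U h) (hC₀ : 0 ≤ C) (hC : ∀ t ∈ U, |h t| ≤ C)
    (hint : IntegrableOn (deriv h) U) (hdb : d < b)
    (hfr : Disjoint (Set.Ioo d b) (frontier U)) :
    |∫ t in U ∩ Set.Iio b, deriv h t| ≤ |∫ t in U ∩ Set.Iio d, deriv h t| + 2 * C := by
  have hgap : |∫ t in U ∩ Set.Ioo d b, deriv h t| ≤ 2 * C := by
    obtain hIU | hIU := subset_or_disjoint_of_disjoint_frontier isPreconnected_Ioo hU hfr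
    · rw [Set.inter_eq_right.2 hIU]
      exact abs_integral_deriv_Ioo_le hdb (hh.mono hIU) (fun t ht ↦ hC t (hIU ht))
        (hint.mono_set hIU)
    · simp [hIU.symm.inter_eq, hC₀]
  have hsplit : ∫ t in U ∩ Set.Iio b, deriv h t
      = (∫ t in U ∩ Set.Iio d, deriv h t) + ∫ t in U ∩ Set.Ioo d b, deriv h t := by
    rw [← Set.Iio_union_Ico_eq_Iio hdb.le, Set.inter_union_distrib_left, setIntegral_union
      ((Set.Iio_disjoint_Ici le_rfl).mono Set.inter_subset_right
        (Set.inter_subset_right.trans Set.Ico_subset_Ici_self))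
      (hU.measurableSet.inter measurableSet_Ico) (hint.mono_set Set.inter_subset_left)
      (hint.mono_set Set.inter_subset_left),
      setIntegral_congr_set (ae_eq_set_inter (ae_eq_refl U) Ioo_ae_eq_Ico)]
  rw [hsplit]
  exact (abs_add_le _ _).trans (by gcongr)

theorem abs_integral_deriv_inter_Iio_le {U : Set ℝ} {h : ℝ → ℝ} {C : ℝ} (hU : IsOpen U)
    (hbdd : BddBelow U) (hh : LocallyLipschitzOn U h) (hC₀ : 0 ≤ C) (hC : ∀ t ∈ U, |h t| ≤ C)
    (hint : IntegrableOn (deriv h) U) (F : Finset ℝ) :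
    ∀ b, frontier U ∩ Set.Iio b ⊆ F → |∫ t in U ∩ Set.Iio b, deriv h t| ≤ 2 * C * F.card := by
  induction F using Finset.induction_on_max with
  | empty =>
    intro b hb
    have hdisj : Disjoint (Set.Iio b) U := by
      refine (subset_or_disjoint_of_disjoint_frontier isPreconnected_Iio hU ?_).resolve_left
        fun hsub ↦ not_bddBelow_Iio b (hbdd.mono hsub)
      rw [Set.disjoint_iff, Set.inter_comm]
      simpa using hb
    simp [hdisj.symm.inter_eq]
  | insert d F hd ih =>
    intro b hb
    have hsub : frontier U ∩ Set.Iio (min b d) ⊆ F := fun x ⟨hx, hxb⟩ ↦ by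
      have hxF := hb ⟨hx, hxb.trans_le (min_le_left b d)⟩
      have hxd := (hxb.trans_le (min_le_right b d)).ne
      simpa [hxd] using hxF
    have hleft := ih _ hsub
    rw [Finset.card_insert_of_notMem fun hmem ↦ (hd d hmem).false]
    push_cast
    obtain hbd | hdb := le_or_gt b d
    · rw [min_eq_left hbd] at hleft
      linarith
    · rw [min_eq_right hdb.le] at hleft
      linarith [abs_integral_deriv_inter_Iio_le_add hU hh hC₀ hC hint hdb <|
        Set.disjoint_left.2 fun x hx hxU ↦ by
          obtain rfl | hxF := Finset.mem_insert.1 (hb ⟨hxU, hx.2⟩)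
          exacts [hx.1.false, hx.1.not_gt (hd x hxF)]]

theorem abs_integral_deriv_le_ncard_frontier {U : Set ℝ} {h : ℝ → ℝ} {C : ℝ} (hU : IsOpen U)
    (hbdd : Bornology.IsBounded U) (hh : LocallyLipschitzOn U h) (hC₀ : 0 ≤ C)
    (hC : ∀ t ∈ U, |h t| ≤ C) (hint : IntegrableOn (deriv h) U) (hfin : (frontier U).Finite) :
    |∫ t in U, deriv h t| ≤ 2 * C * (frontier U).ncard := by
  obtain ⟨b, hb⟩ := hbdd.bddAbove
  have hUb : U ∩ Set.Iio (b + 1) = U :=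
    Set.inter_eq_left.2 fun t ht ↦ (hb ht).trans_lt (lt_add_one b)
  rw [Set.ncard_eq_toFinset_card _ hfin]
  simpa only [hUb] using abs_integral_deriv_inter_Iio_le hU hbdd.bddBelow hh hC₀ hC hint
    hfin.toFinset (b + 1) (by simp)

end RealLine

section LocallyLipschitz

theorem locallyLipschitzOn_comp {α β γ : Type*} [PseudoEMetricSpace α] [PseudoEMetricSpace β]
    [PseudoEMetricSpace γ] {f : α → β} {g : β → γ} {s : Set α} {t : Set β}
    (hg : LocallyLipschitzOn t g) (hf : LocallyLipschitzOn s f) (hst : Set.MapsTo f s t) :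
    LocallyLipschitzOn s (g ∘ f) := by
  intro x hx
  obtain ⟨Kf, A, hA, hfA⟩ := hf hx
  obtain ⟨Kg, B, hB, hgB⟩ := hg (hst hx)
  have hBs : f ⁻¹' B ∈ 𝓝[s] x := (hf.continuousOn x hx).tendsto_nhdsWithin hst hB
  exact ⟨Kg * Kf, A ∩ f ⁻¹' B, inter_mem hA hBs,
    hgB.comp (hfA.mono Set.inter_subset_left) fun y hy ↦ hy.2⟩

theorem locallyLipschitzOn_prodMk {α β γ : Type*} [PseudoEMetricSpace α] [PseudoEMetricSpace β]
    [PseudoEMetricSpace γ] {f : α → β} {g : α → γ} {s : Set α} (hf : LocallyLipschitzOn s f)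
    (hg : LocallyLipschitzOn s g) : LocallyLipschitzOn s fun x ↦ (f x, g x) := by
  intro x hx
  obtain ⟨Kf, A, hA, hfA⟩ := hf hx
  obtain ⟨Kg, B, hB, hgB⟩ := hg hx
  exact ⟨max Kf Kg, A ∩ B, inter_mem hA hB,
    (hfA.mono Set.inter_subset_left).prodMk (hgB.mono Set.inter_subset_right)⟩

theorem locallyLipschitzOn_of_contDiffOn {E F : Type*} [NormedAddCommGroup E] [NormedSpace ℝ E]
    [NormedAddCommGroup F] [NormedSpace ℝ F] {f : E → F} {s : Set E} (hs : IsOpen s)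
    (hf : ContDiffOn ℝ 1 f s) : LocallyLipschitzOn s f := fun _x hx ↦
  let ⟨K, t, ht, hK⟩ := (hf.contDiffAt (hs.mem_nhds hx)).exists_lipschitzOnWith
  ⟨K, t, mem_nhdsWithin_of_mem_nhds ht, hK⟩

theorem ae_differentiableAt_of_locallyLipschitzOn {E F : Type*} [NormedAddCommGroup E]
    [NormedSpace ℝ E] [FiniteDimensional ℝ E] [MeasurableSpace E] [BorelSpace E]
    [NormedAddCommGroup F] [NormedSpace ℝ F] [FiniteDimensional ℝ F] (μ : Measure E)
    [μ.IsAddHaarMeasure] {f : E → F} {s : Set E} (hs : IsOpen s) (hf : LocallyLipschitzOn s f) :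
    ∀ᵐ x ∂μ, x ∈ s → DifferentiableAt ℝ f x := by
  refine measure_null_of_locally_null _ fun x hx ↦ ?_
  have hxs : x ∈ s := by_contra fun h ↦ hx fun h' ↦ (h h').elim
  obtain ⟨K, t, ht, hK⟩ := hf hxs
  rw [hs.nhdsWithin_eq hxs] at ht
  refine ⟨{y | y ∈ interior t ∧ ¬DifferentiableAt ℝ f y}, ?_, ?_⟩
  · filter_upwards [self_mem_nhdsWithin,
      mem_nhdsWithin_of_mem_nhds (interior_mem_nhds.2 ht)] with y hy hyt
    exact ⟨hyt, fun h ↦ hy fun _ ↦ h⟩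
  · have hnull := ae_iff.1 ((hK.mono interior_subset).ae_differentiableWithinAt_of_mem (μ := μ))
    refine measure_mono_null ?_ hnull
    exact fun y hy h ↦ hy.2 ((h hy.1).differentiableAt (isOpen_interior.mem_nhds hy.1))

end LocallyLipschitz

section GaussGreen

theorem abs_integral_fderiv_line_le {E : Type*} [NormedAddCommGroup E] [NormedSpace ℝ E]
    {U : Set E} {h : E → ℝ} {C : ℝ} {p e : E} (he : ‖e‖ = 1) (hU : IsOpen U)
    (hbdd : Bornology.IsBounded U) (hh : LocallyLipschitzOn U h) (hC₀ : 0 ≤ C)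
    (hC : ∀ x ∈ U, |h x| ≤ C)
    (hdiff : ∀ᵐ t : ℝ, p + t • e ∈ U → DifferentiableAt ℝ h (p + t • e))
    (hint : IntegrableOn (fun t : ℝ ↦ fderiv ℝ h (p + t • e) e) {t | p + t • e ∈ U})
    (hfin : (frontier U ∩ Set.range fun t : ℝ ↦ p + t • e).Finite) :
    |∫ t in {t : ℝ | p + t • e ∈ U}, fderiv ℝ h (p + t • e) e|
      ≤ 2 * C * (frontier U ∩ Set.range fun t : ℝ ↦ p + t • e).ncard := by
  let γ (t : ℝ) : E := p + t • e
  have hγ : Isometry γ := Isometry.of_dist_eq fun s t ↦ by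
    simp [γ, dist_eq_norm, ← sub_smul, norm_smul, he]
  have hV : IsOpen (γ ⁻¹' U) := hU.preimage hγ.continuous
  have hderiv : ∀ᵐ t, t ∈ γ ⁻¹' U → fderiv ℝ h (γ t) e = deriv (h ∘ γ) t := by
    filter_upwards [hdiff] with t ht htU
    have hγt : HasDerivAt γ e t := by
      simpa [γ] using ((hasDerivAt_id t).smul_const e).const_add p
    exact ((ht htU).hasFDerivAt.comp_hasDerivAt t hγt).deriv.symm
  have hmaps : Set.MapsTo γ (frontier (γ ⁻¹' U)) (frontier U ∩ Set.range γ) := fun t ht ↦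
    ⟨hγ.continuous.frontier_preimage_subset U ht, t, rfl⟩
  have hVfin : (frontier (γ ⁻¹' U)).Finite := Set.Finite.of_injOn hmaps hγ.injective.injOn hfin
  calc |∫ t in γ ⁻¹' U, fderiv ℝ h (γ t) e| = |∫ t in γ ⁻¹' U, deriv (h ∘ γ) t| := by
        rw [setIntegral_congr_ae hV.measurableSet hderiv]
    _ ≤ 2 * C * (frontier (γ ⁻¹' U)).ncard :=
        abs_integral_deriv_le_ncard_frontier hV (hγ.antilipschitz.isBounded_preimage hbdd)
          (locallyLipschitzOn_comp hh hγ.lipschitz.locallyLipschitz.locallyLipschitzOn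
            fun t ht ↦ ht) hC₀ (fun t ht ↦ hC _ ht)
          (hint.congr_fun_ae <| (ae_restrict_iff' hV.measurableSet).2 hderiv) hVfin
    _ ≤ 2 * C * (frontier U ∩ Set.range γ).ncard := by
        gcongr
        exact Set.ncard_le_ncard_of_injOn γ hmaps hγ.injective.injOn hfin

variable {n : ℕ}

/-- The measurable equivalence `ℝ × ℝⁿ ≃ ℝⁿ⁺¹` putting the real number into the `i`-th coordinate.
The `n` remaining coordinates carry the supremum norm, for which `μH[n]` is Lebesgue measure. -/
def insertCoord (i : Fin (n + 1)) : ℝ × (Fin n → ℝ) ≃ᵐ EuclideanSpace ℝ (Fin (n + 1)) :=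
  (MeasurableEquiv.piFinSuccAbove (fun _ ↦ ℝ) i).symm.trans (MeasurableEquiv.toLp 2 _)

theorem measurePreserving_insertCoord (i : Fin (n + 1)) : MeasurePreserving (insertCoord i) :=
  (volume_preserving_piFinSuccAbove (fun _ ↦ ℝ) i).symm.trans
    (PiLp.volume_preserving_toLp (Fin (n + 1)))

theorem insertCoord_eq_add_smul (i : Fin (n + 1)) (t : ℝ) (y : Fin n → ℝ) :
    insertCoord i (t, y) = insertCoord i (0, y) + t • EuclideanSpace.single i 1 := by
  ext j
  refine Fin.succAboveCases i ?_ (fun k ↦ ?_) j <;>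
    simp [insertCoord, MeasurableEquiv.piFinSuccAbove, Fin.insertNthEquiv]

theorem removeNth_insertCoord (i : Fin (n + 1)) (t : ℝ) (y : Fin n → ℝ) :
    i.removeNth (insertCoord i (t, y)).ofLp = y := by
  ext k
  simp [insertCoord, MeasurableEquiv.piFinSuccAbove, Fin.insertNthEquiv, Fin.removeNth]

theorem lipschitzWith_removeNth (i : Fin (n + 1)) :
    LipschitzWith 1 fun x : EuclideanSpace ℝ (Fin (n + 1)) ↦ i.removeNth x.ofLp :=
  LipschitzWith.of_dist_le_mul fun x y ↦ by
    rw [NNReal.coe_one, one_mul, dist_pi_le_iff dist_nonneg]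
    exact fun k ↦ by
      simpa [dist_eq_norm, Fin.removeNth] using PiLp.norm_apply_le (x - y) (i.succAbove k)

theorem exists_measurable_encard_line_inter_le (i : Fin (n + 1))
    (E : Set (EuclideanSpace ℝ (Fin (n + 1)))) :
    ∃ N : (Fin n → ℝ) → ℝ≥0∞, Measurable N ∧
      (∀ y, ((E ∩ Set.range fun t : ℝ ↦ insertCoord i (0, y) +
        t • EuclideanSpace.single i 1).encard : ℝ≥0∞) ≤ N y) ∧
      ∫⁻ y, N y ≤ μH[n] E := by
  obtain ⟨N, hN, hle, hint⟩ := exists_measurable_encard_fiber_le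
    ((lipschitzWith_removeNth i).lipschitzOnWith (s := E)) n.cast_nonneg
  refine ⟨N, hN, fun y ↦ le_trans ?_ (hle y), ?_⟩
  · gcongr
    rintro _ ⟨t, rfl⟩
    simp [← insertCoord_eq_add_smul, removeNth_insertCoord]
  · simpa [← hausdorffMeasure_pi_real] using hint

theorem ae_abs_integral_slice_le {U : Set (EuclideanSpace ℝ (Fin (n + 1)))}
    {h : EuclideanSpace ℝ (Fin (n + 1)) → ℝ} {C : ℝ} {i : Fin (n + 1)} {N : (Fin n → ℝ) → ℝ≥0∞}
    (hU : IsOpen U) (hbdd : Bornology.IsBounded U) (hh : LocallyLipschitzOn U h) (hC₀ : 0 ≤ C)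
    (hC : ∀ x ∈ U, |h x| ≤ C)
    (hint : IntegrableOn (fun x ↦ fderiv ℝ h x (EuclideanSpace.single i 1)) U)
    (hle : ∀ y, ((frontier U ∩ Set.range fun t : ℝ ↦ insertCoord i (0, y) +
      t • EuclideanSpace.single i 1).encard : ℝ≥0∞) ≤ N y) (hfin : ∀ᵐ y, N y < ⊤) :
    ∀ᵐ y, |∫ t, U.indicator (fun x ↦ fderiv ℝ h x (EuclideanSpace.single i 1))
      (insertCoord i (t, y))| ≤ 2 * C * (N y).toReal := by
  have hpres := (measurePreserving_insertCoord i).comp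
    (Measure.measurePreserving_swap (μ := (volume : Measure (Fin n → ℝ))))
  have hdiff := Measure.ae_ae_of_ae_prod <| hpres.quasiMeasurePreserving.ae <|
    ae_differentiableAt_of_locallyLipschitzOn volume hU hh
  have hslice := (hpres.integrable_comp_of_integrable
    (hint.integrable_indicator hU.measurableSet)).prod_right_ae
  filter_upwards [hdiff, hslice, hfin] with y hdiffy hslicey hfiny
  have hfrfin := Set.encard_lt_top_iff.1 (ENat.toENNReal_lt_top.1 ((hle y).trans_lt hfiny))
  let V : Set ℝ := {t | insertCoord i (0, y) + t • EuclideanSpace.single i 1 ∈ U}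
  have hV : MeasurableSet V := hU.measurableSet.preimage (by fun_prop)
  have hind (t : ℝ) : U.indicator (fun x ↦ fderiv ℝ h x (EuclideanSpace.single i 1))
      (insertCoord i (t, y)) = V.indicator (fun t ↦ fderiv ℝ h (insertCoord i (0, y) +
        t • EuclideanSpace.single i 1) (EuclideanSpace.single i 1)) t := by
    rw [insertCoord_eq_add_smul]
    rfl
  simp only [Function.comp_apply, Prod.swap_prod_mk, hind] at hslicey ⊢
  rw [integral_indicator hV]
  refine (abs_integral_fderiv_line_le (by simp) hU hbdd hh hC₀ hC
    (hdiffy.mono fun t ht ↦ by rwa [← insertCoord_eq_add_smul])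
    ((integrable_indicator_iff hV).1 hslicey) hfrfin).trans ?_
  gcongr
  rw [← ENNReal.toReal_natCast, ← ENat.toENNReal_coe, hfrfin.cast_ncard_eq]
  exact ENNReal.toReal_mono hfiny.ne (hle y)

theorem abs_integral_fderiv_single_le {U : Set (EuclideanSpace ℝ (Fin (n + 1)))}
    {h : EuclideanSpace ℝ (Fin (n + 1)) → ℝ} {C : ℝ} {i : Fin (n + 1)} (hU : IsOpen U)
    (hbdd : Bornology.IsBounded U) (hh : LocallyLipschitzOn U h) (hC₀ : 0 ≤ C)
    (hC : ∀ x ∈ U, |h x| ≤ C)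
    (hint : IntegrableOn (fun x ↦ fderiv ℝ h x (EuclideanSpace.single i 1)) U)
    (hfin : μH[n] (frontier U) < ⊤) :
    |∫ x in U, fderiv ℝ h x (EuclideanSpace.single i 1)|
      ≤ 2 * C * (μH[n] (frontier U)).toReal := by
  obtain ⟨N, hN, hle, hNint⟩ := exists_measurable_encard_line_inter_le i (frontier U)
  have hNne : ∫⁻ y, N y ≠ ⊤ := (hNint.trans_lt hfin).ne
  have hNfin : ∀ᵐ y, N y < ⊤ := ae_lt_top hN hNne
  let G := U.indicator fun x ↦ fderiv ℝ h x (EuclideanSpace.single i 1)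
  have hG : Integrable (fun p ↦ G (insertCoord i p)) :=
    (measurePreserving_insertCoord i).integrable_comp_of_integrable
      (hint.integrable_indicator hU.measurableSet)
  calc |∫ x in U, fderiv ℝ h x (EuclideanSpace.single i 1)|
      = |∫ y, ∫ t, G (insertCoord i (t, y))| := by
        rw [← integral_indicator hU.measurableSet, ← integral_prod_symm _ hG,
          ← (measurePreserving_insertCoord i).integral_comp']
        rfl
    _ ≤ ∫ y, 2 * C * (N y).toReal := by
        rw [← Real.norm_eq_abs]
        exact norm_integral_le_of_norm_le ((integrable_toReal_of_lintegral_ne_top hN.aemeasurable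
          hNne).const_mul _) (ae_abs_integral_slice_le hU hbdd hh hC₀ hC hint hle hNfin)
    _ = 2 * C * (∫⁻ y, N y).toReal := by
        rw [integral_const_mul, integral_toReal hN.aemeasurable hNfin]
    _ ≤ 2 * C * (μH[n] (frontier U)).toReal := by
        gcongr
        exact hfin.ne

end GaussGreen

section LevelSets

theorem frontier_setOf_mem_and_lt_subset {X : Type*} [TopologicalSpace X] {s : Set X} {f : X → ℝ}
    (hs : IsOpen s) (hf : ContinuousOn f s) (c : ℝ) :
    frontier {x | x ∈ s ∧ f x < c} ⊆ {x | x ∈ s ∧ f x = c} ∪ frontier s := by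
  have hopen : IsOpen {x | x ∈ s ∧ f x < c} := hf.isOpen_inter_preimage hs isOpen_Iio
  rw [hopen.frontier_eq, hs.frontier_eq]
  rintro x ⟨hx, hxU⟩
  by_cases hxs : x ∈ s
  · refine .inl ⟨hxs, le_antisymm ?_ (not_lt.1 fun h ↦ hxU ⟨hxs, h⟩)⟩
    have hcl : x ∈ closure ({x | x ∈ s ∧ f x < c} ∩ s) := by
      rwa [Set.inter_eq_left.2 fun y hy ↦ hy.1]
    exact closure_minimal (Set.image_subset_iff.2 fun y hy ↦ hy.1.2.le) isClosed_Iic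
      (((hf x hxs).mono fun y hy ↦ hy.2).mem_closure_image hcl)
  · exact .inr ⟨closure_mono (fun y hy ↦ hy.1) hx, hxs⟩

theorem frontier_diff_subset_of_isClosed {X : Type*} [TopologicalSpace X] {s t : Set X}
    (ht : IsClosed t) : frontier (s \ t) ⊆ frontier s ∪ t := by
  rw [Set.sdiff_eq]
  refine (frontier_inter_subset s tᶜ).trans (Set.union_subset_union Set.inter_subset_left ?_)
  rw [frontier_compl]
  exact Set.inter_subset_right.trans ht.frontier_subset

theorem measure_zero_of_hausdorffMeasure_lt_top {E : Type*} [NormedAddCommGroup E]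
    [NormedSpace ℝ E] [FiniteDimensional ℝ E] [MeasurableSpace E] [BorelSpace E]
    (μ : Measure E) [μ.IsAddHaarMeasure] {d : ℝ} {s : Set E}
    (hd : d < Module.finrank ℝ E) (hs : μH[d] s < ⊤) : μ s = 0 :=
  Measure.absolutelyContinuous_isAddHaarMeasure μ μH[Module.finrank ℝ E]
    ((Measure.hausdorffMeasure_zero_or_top hd s).resolve_right hs.ne)

theorem setOf_not_lt_ae_eq {α : Type*} [MeasurableSpace α] {μ : Measure α} {s : Set α} {f : α → ℝ}
    {c : ℝ} (hlevel : μ {x | x ∈ s ∧ f x = c} = 0) :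
    (s \ {x | x ∈ s ∧ c < f x} : Set α) =ᵐ[μ] {x | x ∈ s ∧ f x < c} := by
  filter_upwards [measure_eq_zero_iff_ae_notMem.1 hlevel] with x hx
  refine propext ⟨fun h ↦ ⟨h.1, ?_⟩, fun h ↦ ⟨h.1, fun h' ↦ lt_asymm h.2 h'.2⟩⟩
  exact lt_of_le_of_ne (not_lt.1 fun h' ↦ h.2 ⟨h.1, h'⟩) fun h' ↦ hx ⟨h.1, h'⟩

end LevelSets

section ProductRule

variable {E F : Type*} [NormedAddCommGroup E] [NormedSpace ℝ E] [NormedAddCommGroup F]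
  [NormedSpace ℝ F]

theorem abs_mul_sub_mul_sub_fderiv_le {φ : E × F → ℝ} {u w : E → F} {x : E} {L : ℝ≥0}
    (ℓ : F →L[ℝ] ℝ) (hφ : DifferentiableAt ℝ φ (x, w x)) (hφL : LipschitzWith L φ)
    (hu : DifferentiableAt ℝ u x) (hw : DifferentiableAt ℝ w x) (e : E) :
    |φ (x, u x) * ℓ (fderiv ℝ u x e) - φ (x, w x) * ℓ (fderiv ℝ w x e)
        - fderiv ℝ (fun y ↦ φ (y, w y) * ℓ (u y - w y)) x e|
      ≤ L * ‖ℓ‖ * ‖u x - w x‖ * ((‖fderiv ℝ u x‖ + ‖fderiv ℝ w x‖ + 1) * ‖e‖) := by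
  have hderiv : fderiv ℝ (fun y ↦ φ (y, w y) * ℓ (u y - w y)) x e
      = φ (x, w x) * (ℓ (fderiv ℝ u x e) - ℓ (fderiv ℝ w x e))
        + ℓ (u x - w x) * fderiv ℝ φ (x, w x) (e, fderiv ℝ w x e) := by
    have hφw := hφ.hasFDerivAt.comp x ((hasFDerivAt_id x).prodMk hw.hasFDerivAt)
    have hℓ := ℓ.hasFDerivAt.comp x (hu.hasFDerivAt.sub hw.hasFDerivAt)
    have hmul : HasFDerivAt (fun y ↦ φ (y, w y) * ℓ (u y - w y)) _ x := hφw.mul hℓ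
    rw [hmul.fderiv]
    simp
  have hφu : |φ (x, u x) - φ (x, w x)| ≤ L * ‖u x - w x‖ := by
    simpa [dist_eq_norm, Prod.norm_def] using hφL.dist_le_mul (x, u x) (x, w x)
  have he : ‖(e, fderiv ℝ w x e)‖ ≤ (‖fderiv ℝ w x‖ + 1) * ‖e‖ := by
    rw [add_one_mul]
    exact max_le (le_add_of_nonneg_left (by positivity))
      (((fderiv ℝ w x).le_opNorm e).trans (le_add_of_nonneg_right (norm_nonneg e)))
  have hφ' : |fderiv ℝ φ (x, w x) (e, fderiv ℝ w x e)| ≤ L * ((‖fderiv ℝ w x‖ + 1) * ‖e‖) :=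
    (fderiv ℝ φ (x, w x)).le_of_opNorm_le_of_le (norm_fderiv_le_of_lipschitz ℝ hφL) he
  have hℓu : |ℓ (fderiv ℝ u x e)| ≤ ‖ℓ‖ * (‖fderiv ℝ u x‖ * ‖e‖) :=
    ℓ.le_opNorm_of_le ((fderiv ℝ u x).le_opNorm e)
  calc
    _ = |(φ (x, u x) - φ (x, w x)) * ℓ (fderiv ℝ u x e)
        - ℓ (u x - w x) * fderiv ℝ φ (x, w x) (e, fderiv ℝ w x e)| := by
        rw [hderiv]
        ring_nf
    _ ≤ L * ‖u x - w x‖ * (‖ℓ‖ * (‖fderiv ℝ u x‖ * ‖e‖))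
        + ‖ℓ‖ * ‖u x - w x‖ * (L * ((‖fderiv ℝ w x‖ + 1) * ‖e‖)) := by
        refine (abs_sub _ _).trans ?_
        rw [abs_mul, abs_mul]
        gcongr
        exact ℓ.le_opNorm _
    _ = _ := by ring

theorem locallyLipschitzOn_mul_clm_sub {φ : E × F → ℝ} {u w : E → F} {s : Set E} (ℓ : F →L[ℝ] ℝ)
    (hs : IsOpen s) (hφ : ContDiff ℝ 1 φ) (hu : LocallyLipschitzOn s u) (hw : ContDiffOn ℝ 1 w s) :
    LocallyLipschitzOn s fun x ↦ φ (x, w x) * ℓ (u x - w x) := by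
  have hw' : ContDiffOn ℝ 1 (fun p : E × F ↦ w p.1) (s ×ˢ Set.univ) :=
    hw.comp contDiff_fst.contDiffOn fun p hp ↦ hp.1
  have hΦ : ContDiffOn ℝ 1 (fun p : E × F ↦ φ (p.1, w p.1) * ℓ (p.2 - w p.1))
      (s ×ˢ Set.univ) :=
    (hφ.comp_contDiffOn (contDiff_fst.contDiffOn.prodMk hw')).mul
      (ℓ.contDiff.comp_contDiffOn (contDiff_snd.contDiffOn.sub hw'))
  exact locallyLipschitzOn_comp (locallyLipschitzOn_of_contDiffOn (hs.prod isOpen_univ) hΦ)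
    (locallyLipschitzOn_prodMk LipschitzWith.id.locallyLipschitz.locallyLipschitzOn hu)
    fun x hx ↦ ⟨hx, trivial⟩

variable [MeasurableSpace E] [BorelSpace E] {φ : E × F → ℝ} {u w : E → F} {s : Set E}
  {L : ℝ≥0} {B c : ℝ}

theorem integrableOn_mul_clm_fderiv [SecondCountableTopology E] {μ : Measure E}
    (ℓ : F →L[ℝ] ℝ) (e : E) (hs : IsOpen s) (hφ : Continuous φ) (hφB : ∀ p, |φ p| ≤ B)
    (hu : ContinuousOn u s) (hu' : IntegrableOn (fderiv ℝ u) s μ) :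
    IntegrableOn (fun x ↦ φ (x, u x) * ℓ (fderiv ℝ u x e)) s μ :=
  (ℓ.integrable_comp (hu'.apply_continuousLinearMap e)).bdd_mul
    ((hφ.comp_continuousOn (continuousOn_id.prodMk hu)).aestronglyMeasurable hs.measurableSet)
    (.of_forall fun x ↦ hφB (x, u x))

variable [FiniteDimensional ℝ E] [FiniteDimensional ℝ F]

theorem ae_abs_mul_sub_mul_sub_fderiv_le (μ : Measure E) [μ.IsAddHaarMeasure] (ℓ : F →L[ℝ] ℝ)
    (e : E) (hs : IsOpen s) (hφ : Differentiable ℝ φ) (hφL : LipschitzWith L φ)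
    (hu : LocallyLipschitzOn s u) (hw : DifferentiableOn ℝ w s) (hc : ∀ x ∈ s, ‖u x - w x‖ ≤ c) :
    ∀ᵐ x ∂μ.restrict s, |φ (x, u x) * ℓ (fderiv ℝ u x e) - φ (x, w x) * ℓ (fderiv ℝ w x e)
        - fderiv ℝ (fun y ↦ φ (y, w y) * ℓ (u y - w y)) x e|
      ≤ L * ‖ℓ‖ * c * ((‖fderiv ℝ u x‖ + ‖fderiv ℝ w x‖ + 1) * ‖e‖) := by
  rw [ae_restrict_iff' hs.measurableSet]
  filter_upwards [ae_differentiableAt_of_locallyLipschitzOn μ hs hu] with x hux hx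
  refine (abs_mul_sub_mul_sub_fderiv_le ℓ (hφ _) hφL (hux hx)
    (hw.differentiableAt (hs.mem_nhds hx)) e).trans ?_
  gcongr
  exact hc x hx

theorem integrableOn_fderiv_mul_clm_sub {μ : Measure E} [μ.IsAddHaarMeasure] (ℓ : F →L[ℝ] ℝ)
    (e : E) (hs : IsOpen s) (hbdd : Bornology.IsBounded s) (hφ : Differentiable ℝ φ)
    (hφL : LipschitzWith L φ) (hφB : ∀ p, |φ p| ≤ B) (hu : LocallyLipschitzOn s u)
    (hu' : IntegrableOn (fderiv ℝ u) s μ) (hw : DifferentiableOn ℝ w s)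
    (hw' : IntegrableOn (fderiv ℝ w) s μ) (hc : ∀ x ∈ s, ‖u x - w x‖ ≤ c) :
    IntegrableOn (fun x ↦ fderiv ℝ (fun y ↦ φ (y, w y) * ℓ (u y - w y)) x e) s μ := by
  have := FiniteDimensional.proper ℝ E
  have hA := (integrableOn_mul_clm_fderiv ℓ e hs hφ.continuous hφB hu.continuousOn hu').sub
    (integrableOn_mul_clm_fderiv ℓ e hs hφ.continuous hφB hw.continuousOn hw')
  have hbound : IntegrableOn
      (fun x ↦ L * ‖ℓ‖ * c * ((‖fderiv ℝ u x‖ + ‖fderiv ℝ w x‖ + 1) * ‖e‖)) s μ :=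
    (((hu'.norm.add hw'.norm).add (integrableOn_const hbdd.measure_lt_top.ne)).mul_const
      _).const_mul _
  have hrem := hbound.mono' (hA.aestronglyMeasurable.sub
    (measurable_fderiv_apply_const ℝ (fun y ↦ φ (y, w y) * ℓ (u y - w y)) e).aestronglyMeasurable)
    (ae_abs_mul_sub_mul_sub_fderiv_le μ ℓ e hs hφ hφL hu hw hc)
  exact (hA.sub hrem).congr (.of_forall fun x ↦ sub_sub_cancel _ _)

theorem abs_setIntegral_mul_clm_fderiv_sub_le {n : ℕ} {U : Set (EuclideanSpace ℝ (Fin (n + 1)))}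
    {u w : EuclideanSpace ℝ (Fin (n + 1)) → F} {φ : EuclideanSpace ℝ (Fin (n + 1)) × F → ℝ}
    (ℓ : F →L[ℝ] ℝ) (i : Fin (n + 1)) (hU : IsOpen U) (hbdd : Bornology.IsBounded U)
    (hφ : ContDiff ℝ 1 φ) (hφL : LipschitzWith L φ) (hφB : ∀ p, |φ p| ≤ B)
    (hu : LocallyLipschitzOn U u) (hu' : IntegrableOn (fderiv ℝ u) U) (hw : ContDiffOn ℝ 1 w U)
    (hw' : IntegrableOn (fderiv ℝ w) U) (hc₀ : 0 ≤ c) (hc : ∀ x ∈ U, ‖u x - w x‖ ≤ c)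
    (hfin : μH[n] (frontier U) < ⊤) :
    |(∫ x in U, φ (x, u x) * ℓ (fderiv ℝ u x (EuclideanSpace.single i 1)))
        - ∫ x in U, φ (x, w x) * ℓ (fderiv ℝ w x (EuclideanSpace.single i 1))|
      ≤ L * ‖ℓ‖ * c * (∫ x in U, (‖fderiv ℝ u x‖ + ‖fderiv ℝ w x‖ + 1))
        + 2 * (B * (‖ℓ‖ * c)) * (μH[n] (frontier U)).toReal := by
  set e : EuclideanSpace ℝ (Fin (n + 1)) := EuclideanSpace.single i 1
  let A x := φ (x, u x) * ℓ (fderiv ℝ u x e)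
  let G x := φ (x, w x) * ℓ (fderiv ℝ w x e)
  let h x := φ (x, w x) * ℓ (u x - w x)
  have hφ' := hφ.differentiable one_ne_zero
  have hw₁ := hw.differentiableOn one_ne_zero
  have hB : 0 ≤ B := (abs_nonneg _).trans (hφB 0)
  have hA : IntegrableOn A U :=
    integrableOn_mul_clm_fderiv ℓ e hU hφ.continuous hφB hu.continuousOn hu'
  have hG : IntegrableOn G U :=
    integrableOn_mul_clm_fderiv ℓ e hU hφ.continuous hφB hw.continuousOn hw'
  have hh : IntegrableOn (fun x ↦ fderiv ℝ h x e) U :=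
    integrableOn_fderiv_mul_clm_sub ℓ e hU hbdd hφ' hφL hφB hu hu' hw₁ hw' hc
  have hrem := ae_abs_mul_sub_mul_sub_fderiv_le volume ℓ e hU hφ' hφL hu hw₁ hc
  simp only [e, PiLp.norm_single, norm_one, mul_one] at hrem
  have hR : IntegrableOn (fun x ↦ L * ‖ℓ‖ * c * (‖fderiv ℝ u x‖ + ‖fderiv ℝ w x‖ + 1)) U :=
    ((hu'.norm.add hw'.norm).add (integrableOn_const hbdd.measure_lt_top.ne)).const_mul _
  have hboundary : |∫ x in U, fderiv ℝ h x e|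
      ≤ 2 * (B * (‖ℓ‖ * c)) * (μH[n] (frontier U)).toReal :=
    abs_integral_fderiv_single_le hU hbdd (locallyLipschitzOn_mul_clm_sub ℓ hU hφ hu hw)
      (by positivity) (fun x hx ↦ (abs_mul _ _).trans_le
        (mul_le_mul (hφB _) (ℓ.le_opNorm_of_le (hc x hx)) (abs_nonneg _) hB)) hh hfin
  have hsplit : (∫ x in U, A x) - ∫ x in U, G x
      = (∫ x in U, (A x - G x - fderiv ℝ h x e)) + ∫ x in U, fderiv ℝ h x e := by
    rw [integral_sub (f := fun x ↦ A x - G x) (hA.sub hG) hh, integral_sub hA hG, sub_add_cancel]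
  rw [hsplit, ← integral_const_mul]
  refine (abs_add_le _ _).trans (add_le_add ?_ hboundary)
  rw [← Real.norm_eq_abs]
  exact norm_integral_le_of_norm_le hR hrem

end ProductRule

section Convergence

theorem tendsto_mul_toReal_of_le_add {lam : ℕ → ℝ} {a m : ℕ → ℝ≥0∞} {M : ℝ≥0∞}
    (hlam : ∀ k, 0 ≤ lam k) (hlam0 : Tendsto lam atTop (𝓝 0)) (ha : ∀ k, a k < ⊤)
    (halim : Tendsto (fun k ↦ ENNReal.ofReal (lam k) * a k) atTop (𝓝 0)) (hM : M < ⊤)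
    (hm : ∀ k, m k ≤ a k + M) : Tendsto (fun k ↦ lam k * (m k).toReal) atTop (𝓝 0) := by
  have halim' : Tendsto (fun k ↦ lam k * (a k).toReal) atTop (𝓝 0) := by
    simpa [Function.comp_def, ENNReal.toReal_ofReal, hlam] using
      (ENNReal.tendsto_toReal ENNReal.zero_ne_top).comp halim
  refine squeeze_zero (fun k ↦ mul_nonneg (hlam k) ENNReal.toReal_nonneg) (fun k ↦ ?_)
    (by simpa using halim'.add (hlam0.mul_const M.toReal))
  rw [← mul_add, ← ENNReal.toReal_add (ha k).ne hM.ne]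
  exact mul_le_mul_of_nonneg_left
    (ENNReal.toReal_mono (ENNReal.add_lt_top.2 ⟨ha k, hM⟩).ne (hm k)) (hlam k)

theorem exists_forall_integrable_and_integral_norm_le {α ι G : Type*} [MeasurableSpace α]
    {μ : Measure α} [NormedAddCommGroup G] {f : ι → α → G} (hf : ∀ k, AEStronglyMeasurable (f k) μ)
    (hbdd : (⨆ k, ∫⁻ x, ‖f k x‖ₑ ∂μ) < ⊤) :
    ∃ M, ∀ k, Integrable (f k) μ ∧ ∫ x, ‖f k x‖ ∂μ ≤ M := by
  refine ⟨(⨆ k, ∫⁻ x, ‖f k x‖ₑ ∂μ).toReal, fun k ↦ ?_⟩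
  have hle := le_iSup (fun k ↦ ∫⁻ x, ‖f k x‖ₑ ∂μ) k
  refine ⟨⟨hf k, hle.trans_lt hbdd⟩, ?_⟩
  rw [integral_norm_eq_lintegral_enorm (hf k)]
  exact ENNReal.toReal_mono hbdd.ne hle

theorem integrableOn_mul_of_mem_Icc {α : Type*} [MeasurableSpace α] {μ : Measure α} {s : Set α}
    {ζ g : α → ℝ} (hζ : Measurable ζ) (hζmem : ∀ x, ζ x ∈ Set.Icc (0 : ℝ) 1)
    (hg : IntegrableOn g s μ) : IntegrableOn (fun x ↦ ζ x * g x) s μ :=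
  hg.bdd_mul hζ.aestronglyMeasurable (c := 1)
    (.of_forall fun x ↦ by simpa [abs_of_nonneg (hζmem x).1] using (hζmem x).2)

theorem tendsto_setIntegral_diff_mul_one_sub {α : Type*} [MeasurableSpace α] {μ : Measure α}
    {s : Set α} {D : ℕ → Set α} {ζ g : α → ℝ} (hD : ∀ k, MeasurableSet (D k))
    (hDs : ∀ k, D k ⊆ s) (hg : IntegrableOn g s μ) (hζg : IntegrableOn (fun x ↦ ζ x * g x) s μ)
    (hconv : Tendsto (fun k ↦ ∫ x in D k, g x ∂μ) atTop (𝓝 (∫ x in s, ζ x * g x ∂μ))) :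
    Tendsto (fun k ↦ ∫ x in s \ D k, g x ∂μ) atTop (𝓝 (∫ x in s, g x * (1 - ζ x) ∂μ)) := by
  have hlim : ∫ x in s, g x * (1 - ζ x) ∂μ = ∫ x in s, g x ∂μ - ∫ x in s, ζ x * g x ∂μ := by
    rw [← integral_sub hg hζg]
    congr with x
    ring
  simp only [hlim, fun k ↦ setIntegral_sdiff (hD k) hg (hDs k)]
  exact hconv.const_sub _

theorem tendsto_setIntegral_diff_of_ae_eq {α : Type*} [MeasurableSpace α] {μ : Measure α}
    {s : Set α} {D U : ℕ → Set α} {ζ g : α → ℝ} {f : ℕ → α → ℝ} (hD : ∀ k, MeasurableSet (D k))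
    (hDs : ∀ k, D k ⊆ s) (hg : IntegrableOn g s μ) (hζg : IntegrableOn (fun x ↦ ζ x * g x) s μ)
    (hconv : Tendsto (fun k ↦ ∫ x in D k, g x ∂μ) atTop (𝓝 (∫ x in s, ζ x * g x ∂μ)))
    (hDU : ∀ k, (s \ D k : Set α) =ᵐ[μ] U k)
    (hf : Tendsto (fun k ↦ (∫ x in U k, f k x ∂μ) - ∫ x in U k, g x ∂μ) atTop (𝓝 0)) :
    Tendsto (fun k ↦ ∫ x in s \ D k, f k x ∂μ) atTop (𝓝 (∫ x in s, g x * (1 - ζ x) ∂μ)) := by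
  simp only [← setIntegral_congr_set (hDU _)] at hf
  simpa using hf.add (tendsto_setIntegral_diff_mul_one_sub hD hDs hg hζg hconv)

theorem tendsto_setIntegral_comp_sub {X Y : Type*} [PseudoMetricSpace X]
    [SecondCountableTopology X] [MeasurableSpace X] [OpensMeasurableSpace X] [PseudoMetricSpace Y]
    {μ : Measure X} {s : Set X} {U : ℕ → Set X} {u : ℕ → X → Y} {w : X → Y} {φ : X × Y → ℝ}
    {lam : ℕ → ℝ} {L : ℝ≥0} {B : ℝ} (hμs : μ s < ⊤) (hU : ∀ k, MeasurableSet (U k))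
    (hUs : ∀ k, U k ⊆ s) (hφL : LipschitzWith L φ) (hφB : ∀ p, |φ p| ≤ B)
    (hu : ∀ k, ContinuousOn (u k) s) (hw : ContinuousOn w s) (hlam : ∀ k, 0 ≤ lam k)
    (hlam0 : Tendsto lam atTop (𝓝 0)) (hc : ∀ k, ∀ x ∈ U k, dist (u k x) (w x) ≤ lam k) :
    Tendsto (fun k ↦ (∫ x in U k, φ (x, u k x) ∂μ) - ∫ x in U k, φ (x, w x) ∂μ) atTop (𝓝 0) := by
  have hUfin k : μ (U k) < ⊤ := (measure_mono (hUs k)).trans_lt hμs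
  have hint k {v : X → Y} (hv : ContinuousOn v s) : IntegrableOn (fun x ↦ φ (x, v x)) (U k) μ :=
    .of_bound (hUfin k) ((hφL.continuous.comp_continuousOn (continuousOn_id.prodMk
      (hv.mono (hUs k)))).aestronglyMeasurable (hU k)) B (.of_forall fun x ↦ hφB _)
  refine squeeze_zero_norm (fun k ↦ ?_) (by simpa using hlam0.const_mul (L * μ.real s))
  rw [← integral_sub (hint k (hu k)) (hint k hw)]
  have hbound x (hx : x ∈ U k) : ‖φ (x, u k x) - φ (x, w x)‖ ≤ L * lam k := by
    refine (hφL.dist_le_mul _ _).trans ?_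
    gcongr
    simpa [Prod.dist_eq] using hc k x hx
  calc
    _ ≤ L * lam k * μ.real (U k) := norm_setIntegral_le_of_norm_le_const (hUfin k) hbound
    _ ≤ L * lam k * μ.real s :=
      mul_le_mul_of_nonneg_left (measureReal_mono (hUs k) hμs.ne)
        (mul_nonneg L.coe_nonneg (hlam k))
    _ = L * μ.real s * lam k := by ring

variable {n : ℕ} {F : Type*} [NormedAddCommGroup F] [NormedSpace ℝ F]
  {Ω : Set (EuclideanSpace ℝ (Fin (n + 1)))} {U : ℕ → Set (EuclideanSpace ℝ (Fin (n + 1)))}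
  {u : ℕ → EuclideanSpace ℝ (Fin (n + 1)) → F} {w : EuclideanSpace ℝ (Fin (n + 1)) → F}
  {φ : EuclideanSpace ℝ (Fin (n + 1)) × F → ℝ} {lam : ℕ → ℝ} {L : ℝ≥0} {B : ℝ}

theorem tendsto_setIntegral_mul_clm_fderiv_sub [FiniteDimensional ℝ F] {M : ℝ} (ℓ : F →L[ℝ] ℝ)
    (i : Fin (n + 1)) (hbdd : Bornology.IsBounded Ω) (hU : ∀ k, IsOpen (U k)) (hUΩ : ∀ k, U k ⊆ Ω)
    (hφ : ContDiff ℝ 1 φ) (hφL : LipschitzWith L φ) (hφB : ∀ p, |φ p| ≤ B)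
    (hu : ∀ k, LocallyLipschitzOn Ω (u k))
    (hu' : ∀ k, IntegrableOn (fderiv ℝ (u k)) Ω ∧ ∫ x in Ω, ‖fderiv ℝ (u k) x‖ ≤ M)
    (hw : ContDiffOn ℝ 1 w Ω) (hw' : IntegrableOn (fderiv ℝ w) Ω)
    (hlam : ∀ k, 0 ≤ lam k) (hlam0 : Tendsto lam atTop (𝓝 0))
    (hc : ∀ k, ∀ x ∈ U k, ‖u k x - w x‖ ≤ lam k) (hfin : ∀ k, μH[n] (frontier (U k)) < ⊤)
    (hfr : Tendsto (fun k ↦ lam k * (μH[n] (frontier (U k))).toReal) atTop (𝓝 0)) :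
    Tendsto (fun k ↦
      (∫ x in U k, φ (x, u k x) * ℓ (fderiv ℝ (u k) x (EuclideanSpace.single i 1)))
        - ∫ x in U k, φ (x, w x) * ℓ (fderiv ℝ w x (EuclideanSpace.single i 1)))
      atTop (𝓝 0) := by
  have hone : IntegrableOn (fun _ ↦ (1 : ℝ)) Ω := integrableOn_const hbdd.measure_lt_top.ne
  let R k x := ‖fderiv ℝ (u k) x‖ + ‖fderiv ℝ w x‖ + 1
  let A := M + (∫ x in Ω, ‖fderiv ℝ w x‖) + ∫ _ in Ω, (1 : ℝ)
  have hR k : ∫ x in U k, R k x ≤ A := by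
    have huw : IntegrableOn (fun x ↦ ‖fderiv ℝ (u k) x‖ + ‖fderiv ℝ w x‖) Ω :=
      (hu' k).1.norm.add hw'.norm
    have hRint : IntegrableOn (R k) Ω := huw.add hone
    refine (setIntegral_mono_set hRint (.of_forall fun x ↦ by positivity)
      (hUΩ k).eventuallyLE).trans ?_
    rw [integral_add huw hone, integral_add (hu' k).1.norm hw'.norm]
    unfold A
    gcongr
    exact (hu' k).2
  refine squeeze_zero_norm (a := fun k ↦ L * ‖ℓ‖ * A * lam k
    + 2 * (B * ‖ℓ‖) * (lam k * (μH[n] (frontier (U k))).toReal)) (fun k ↦ ?_)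
    (by simpa using (hlam0.const_mul _).add (hfr.const_mul _))
  refine (abs_setIntegral_mul_clm_fderiv_sub_le ℓ i (hU k) (hbdd.subset (hUΩ k)) hφ hφL hφB
    ((hu k).mono (hUΩ k)) ((hu' k).1.mono_set (hUΩ k)) (hw.mono (hUΩ k)) (hw'.mono_set (hUΩ k))
    (hlam k) (hc k) (hfin k)).trans ?_
  calc
    _ ≤ L * ‖ℓ‖ * lam k * A + 2 * (B * (‖ℓ‖ * lam k)) * (μH[n] (frontier (U k))).toReal := by
      have := hlam k
      gcongr
      exact hR k
    _ = _ := by ring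

theorem currents_Tk_converge_general {n : ℕ} {F : Type*} [NormedAddCommGroup F] [NormedSpace ℝ F]
    [FiniteDimensional ℝ F] {Ω : Set (EuclideanSpace ℝ (Fin (n + 1)))} (hΩ : IsOpen Ω)
    (hbdd : Bornology.IsBounded Ω) (hΩfr : μH[n] (frontier Ω) < ⊤)
    {w : EuclideanSpace ℝ (Fin (n + 1)) → F} (hw : ContDiffOn ℝ 1 w Ω)
    (hw' : IntegrableOn (fderiv ℝ w) Ω) {u : ℕ → EuclideanSpace ℝ (Fin (n + 1)) → F}
    (hu : ∀ k, LocallyLipschitzOn Ω (u k)) (hu' : (⨆ k, ∫⁻ x in Ω, ‖fderiv ℝ (u k) x‖ₑ) < ⊤)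
    {lam : ℕ → ℝ} (hlam : ∀ k, 0 ≤ lam k) (hlam0 : Tendsto lam atTop (𝓝 0))
    (hH : ∀ k, μH[n] {x | x ∈ Ω ∧ ‖u k x - w x‖ = lam k} < ⊤)
    (hHlim : Tendsto (fun k ↦ ENNReal.ofReal (lam k) * μH[n] {x | x ∈ Ω ∧ ‖u k x - w x‖ = lam k})
      atTop (𝓝 0))
    {D : ℕ → Set (EuclideanSpace ℝ (Fin (n + 1)))}
    (hD : ∀ k, D k = {x | x ∈ Ω ∧ lam k < ‖u k x - w x‖})
    {ζ : EuclideanSpace ℝ (Fin (n + 1)) → ℝ} (hζ : Measurable ζ)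
    (hζmem : ∀ x, ζ x ∈ Set.Icc (0 : ℝ) 1)
    (hconv : ∀ g : EuclideanSpace ℝ (Fin (n + 1)) → ℝ, IntegrableOn g Ω →
      Tendsto (fun k ↦ ∫ x in D k, g x) atTop (𝓝 (∫ x in Ω, ζ x * g x)))
    {φ : EuclideanSpace ℝ (Fin (n + 1)) × F → ℝ} {L : ℝ≥0} {B : ℝ} (hφ : ContDiff ℝ 1 φ)
    (hφL : LipschitzWith L φ) (hφB : ∀ p, |φ p| ≤ B) :
    Tendsto (fun k ↦ ∫ x in Ω \ D k, φ (x, u k x)) atTop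
        (𝓝 (∫ x in Ω, φ (x, w x) * (1 - ζ x))) ∧
      ∀ (i : Fin (n + 1)) (ℓ : F →L[ℝ] ℝ),
        Tendsto (fun k ↦ ∫ x in Ω \ D k,
            φ (x, u k x) * ℓ (fderiv ℝ (u k) x (EuclideanSpace.single i 1))) atTop
          (𝓝 (∫ x in Ω,
            φ (x, w x) * ℓ (fderiv ℝ w x (EuclideanSpace.single i 1)) * (1 - ζ x))) := by
  let U k := {x | x ∈ Ω ∧ ‖u k x - w x‖ < lam k}
  have hcont k : ContinuousOn (fun x ↦ ‖u k x - w x‖) Ω :=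
    ((hu k).continuousOn.sub hw.continuousOn).norm
  have hU k : IsOpen (U k) := (hcont k).isOpen_inter_preimage hΩ isOpen_Iio
  have hDmeas k : MeasurableSet (D k) :=
    hD k ▸ ((hcont k).isOpen_inter_preimage hΩ isOpen_Ioi).measurableSet
  have hDU k : (Ω \ D k : Set _) =ᵐ[volume] U k :=
    hD k ▸ setOf_not_lt_ae_eq (measure_zero_of_hausdorffMeasure_lt_top volume (by simp) (hH k))
  have hfr k : μH[n] (frontier (U k))
      ≤ μH[n] {x | x ∈ Ω ∧ ‖u k x - w x‖ = lam k} + μH[n] (frontier Ω) :=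
    (measure_mono (frontier_setOf_mem_and_lt_subset hΩ (hcont k) _)).trans (measure_union_le _ _)
  have hUfr k : μH[n] (frontier (U k)) < ⊤ :=
    (hfr k).trans_lt (ENNReal.add_lt_top.2 ⟨hH k, hΩfr⟩)
  obtain ⟨M, hM⟩ := exists_forall_integrable_and_integral_norm_le
    (fun k ↦ (measurable_fderiv ℝ (u k)).aestronglyMeasurable) hu'
  have htransfer {g : EuclideanSpace ℝ (Fin (n + 1)) → ℝ} {f} (hg : IntegrableOn g Ω) :=
    tendsto_setIntegral_diff_of_ae_eq (f := f) hDmeas (fun k x hx ↦ (hD k ▸ hx).1) hg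
      (integrableOn_mul_of_mem_Icc hζ hζmem hg) (hconv g hg) hDU
  refine ⟨htransfer (.of_bound hbdd.measure_lt_top ((hφ.continuous.comp_continuousOn
      (continuousOn_id.prodMk hw.continuousOn)).aestronglyMeasurable hΩ.measurableSet) B
      (.of_forall fun x ↦ hφB _)) ?_, fun i ℓ ↦ htransfer (integrableOn_mul_clm_fderiv ℓ _ hΩ
        hφ.continuous hφB hw.continuousOn hw') ?_⟩
  · exact tendsto_setIntegral_comp_sub hbdd.measure_lt_top (fun k ↦ (hU k).measurableSet)
      (fun k x hx ↦ hx.1) hφL hφB (fun k ↦ (hu k).continuousOn) hw.continuousOn hlam hlam0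
      fun k x hx ↦ (dist_eq_norm _ _).trans_le hx.2.le
  · exact tendsto_setIntegral_mul_clm_fderiv_sub ℓ i hbdd hU (fun k x hx ↦ hx.1) hφ hφL hφB hu hM
      hw hw' hlam hlam0 (fun k x hx ↦ hx.2.le) hUfr
      (tendsto_mul_toReal_of_le_add hlam hlam0 hH hHlim hΩfr hfr)

end Convergence

section Normalize

open NormedSpace

theorem norm_mul_norm_normalize_sub_le {E : Type*} [NormedAddCommGroup E] [NormedSpace ℝ E]
    (x y : E) : ‖y‖ * ‖normalize x - normalize y‖ ≤ 2 * ‖x - y‖ := by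
  have hy : ‖y‖ • (normalize x - normalize y) = (‖y‖ - ‖x‖) • normalize x + (x - y) := by
    rw [sub_smul, norm_smul_normalize, smul_sub, norm_smul_normalize]
    abel
  have hx : ‖normalize x‖ ≤ 1 := by
    rcases eq_or_ne x 0 with rfl | hx
    · simp
    · exact (norm_normalize_eq_one_iff.2 hx).le
  calc
    ‖y‖ * ‖normalize x - normalize y‖ = ‖(‖y‖ - ‖x‖) • normalize x + (x - y)‖ := by
      rw [← hy, norm_smul, norm_norm]
    _ ≤ |‖y‖ - ‖x‖| * ‖normalize x‖ + ‖x - y‖ :=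
      (norm_add_le _ _).trans_eq (by rw [norm_smul, Real.norm_eq_abs])
    _ ≤ ‖x - y‖ * 1 + ‖x - y‖ := by
      gcongr
      rw [norm_sub_rev x y]
      exact abs_norm_sub_norm_le y x
    _ = 2 * ‖x - y‖ := by ring

theorem norm_fderiv_normalize_le {E : Type*} [NormedAddCommGroup E] [NormedSpace ℝ E] {x : E}
    (hx : x ≠ 0) : ‖fderiv ℝ NormedSpace.normalize x‖ ≤ 2 * ‖x‖⁻¹ :=
  norm_fderiv_le_of_lip' ℝ (by positivity) <| .of_forall fun y ↦ by
    rw [mul_right_comm, ← div_eq_mul_inv, le_div_iff₀' (norm_pos_iff.2 hx)]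
    exact norm_mul_norm_normalize_sub_le y x

theorem contDiffOn_normalize {E : Type*} [NormedAddCommGroup E] [InnerProductSpace ℝ E]
    {m : WithTop ℕ∞} : ContDiffOn ℝ m (normalize : E → E) {0}ᶜ := fun _x hx ↦
  (((contDiffAt_norm ℝ hx).inv (norm_ne_zero_iff.2 hx)).smul contDiffAt_id).contDiffWithinAt

theorem integrableOn_inv_norm_ball {E : Type*} [NormedAddCommGroup E] [NormedSpace ℝ E]
    [FiniteDimensional ℝ E] [MeasurableSpace E] [BorelSpace E] {μ : Measure E} [μ.IsAddHaarMeasure]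
    (hE : 2 ≤ Module.finrank ℝ E) (r : ℝ) : IntegrableOn (fun x : E ↦ ‖x‖⁻¹) (ball 0 r) μ := by
  have := Module.nontrivial_of_finrank_pos (R := ℝ) (zero_lt_two.trans_le hE)
  rw [integrableOn_fun_norm_addHaar μ (f := fun r ↦ r⁻¹)]
  have hpow : IntegrableOn (fun y : ℝ ↦ y ^ (Module.finrank ℝ E - 2)) (Set.Ioo 0 r) :=
    (continuous_pow _).integrableOn_Icc.mono_set Set.Ioo_subset_Icc_self
  refine hpow.congr_fun (fun y hy ↦ ?_) measurableSet_Ioo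
  obtain ⟨d, hd⟩ := Nat.exists_eq_add_of_le' hE
  simp [hd, pow_succ, hy.1.ne']

theorem integrableOn_fderiv_normalize_ball {E : Type*} [NormedAddCommGroup E] [NormedSpace ℝ E]
    [FiniteDimensional ℝ E] [MeasurableSpace E] [BorelSpace E] {μ : Measure E} [μ.IsAddHaarMeasure]
    (hE : 2 ≤ Module.finrank ℝ E) (r : ℝ) :
    IntegrableOn (fderiv ℝ (normalize : E → E)) (ball 0 r) μ := by
  have := Module.nontrivial_of_finrank_pos (R := ℝ) (zero_lt_two.trans_le hE)
  refine ((integrableOn_inv_norm_ball hE r).const_mul 2).mono'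
    (measurable_fderiv ℝ NormedSpace.normalize).aestronglyMeasurable (ae_restrict_of_ae ?_)
  filter_upwards [measure_eq_zero_iff_ae_notMem.1 (measure_singleton (μ := μ) (0 : E))] with x hx
  exact norm_fderiv_normalize_le hx

end Normalize

section Plane

theorem hausdorffMeasure_sphere_lt_top (x : V2) (r : ℝ) : μH[1] (sphere x r) < ⊤ := by
  rcases lt_or_ge r 0 with hr | hr
  · simp [sphere_eq_empty_of_neg hr]
  let e := Complex.orthonormalBasisOneI.repr
  have hsphere : sphere x r = e '' (circleMap (e.symm x) r '' Set.Ioc 0 (2 * Real.pi)) := by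
    rw [image_circleMap_Ioc, abs_of_nonneg hr, LinearIsometryEquiv.image_sphere,
      e.apply_symm_apply]
  rw [hsphere, e.isometry.hausdorffMeasure_image (.inl zero_le_one)]
  refine ((lipschitzWith_circleMap (e.symm x) r).lipschitzOnWith.hausdorffMeasure_image_le
    zero_le_one).trans_lt (ENNReal.mul_lt_top (by simp) ?_)
  rw [hausdorffMeasure_real]
  exact measure_Ioc_lt_top

theorem hausdorffMeasure_frontier_ball_diff_singleton_lt_top (x y : V2) (r : ℝ) :
    μH[1] (frontier (ball x r \ {y})) < ⊤ := by
  refine (measure_mono (frontier_diff_subset_of_isClosed isClosed_singleton)).trans_lt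
    ((measure_union_le _ _).trans_lt (ENNReal.add_lt_top.2 ⟨?_, ?_⟩))
  · exact (measure_mono frontier_ball_subset_sphere).trans_lt (hausdorffMeasure_sphere_lt_top x r)
  · have := Measure.nullSingletonClass_hausdorff V2 one_pos
    simp

theorem norm_le_sqrt_frobSq (T : V2 →L[ℝ] V2) : ‖T‖ ≤ √(frobSq T) := by
  refine T.opNorm_le_bound (Real.sqrt_nonneg _) fun x ↦ ?_
  have hx : x = ∑ j, x j • EuclideanSpace.single j 1 := by
    simpa using ((EuclideanSpace.basisFun (Fin 2) ℝ).sum_repr x).symm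
  have hT : frobSq T = ∑ j, ‖T (EuclideanSpace.single j 1)‖ ^ 2 := by
    simp only [frobSq, EuclideanSpace.real_norm_sq_eq]
    exact Finset.sum_comm
  calc
    ‖T x‖ = ‖∑ j, x j • T (EuclideanSpace.single j 1)‖ := by
      conv_lhs => rw [hx, map_sum]
      simp only [map_smul]
    _ ≤ ∑ j, ‖T (EuclideanSpace.single j 1)‖ * ‖x j‖ :=
      norm_sum_le_of_le _ fun j _ ↦ by rw [norm_smul, mul_comm]
    _ ≤ √(∑ j, ‖T (EuclideanSpace.single j 1)‖ ^ 2) * √(∑ j, ‖x j‖ ^ 2) :=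
      Real.sum_mul_le_sqrt_mul_sqrt _ _ _
    _ = √(frobSq T) * ‖x‖ := by rw [hT, EuclideanSpace.norm_eq]

end Plane

/-- Convergence of the currents `T_k`: for levels `λ_k`, bad sets `D_k` with weak-* limit
density `ζ`, and every smooth compactly supported test function `φ` on `B_l × ℝ²`,
the integrals over `B_l \ D_k` of `φ(x, u_k(x))` (resp. of `φ(x, u_k(x)) ∂_i (u_k)_j(x)`)
converge to the corresponding integrals against `u` weighted by `1 − ζ`. -/
theorem currents_Tk_converge (l : ℝ) (hl : 0 < l)
    (u : ℕ → V2 → V2) (K : ℕ → ℝ≥0)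
    (hLip : ∀ k, LipschitzOnWith (K k) (u k) (ball (0 : V2) l))
    (hval : ∀ k, ∀ x ∈ ball (0 : V2) l, ‖u k x‖ ≤ 1)
    (hgrad : (⨆ k, ∫⁻ x in ball (0 : V2) l,
        ENNReal.ofReal (Real.sqrt (frobSq (fderiv ℝ (u k) x)))) < ⊤)
    (lam : ℕ → ℝ) (hanti : StrictAnti lam) (hmem : ∀ k, lam k ∈ Set.Ioo (0 : ℝ) 2)
    (hlam0 : Tendsto lam atTop (𝓝 0))
    (hH : ∀ k, μH[1] {x : V2 | x ∈ ball (0 : V2) l \ {0} ∧ ‖u k x - vortex x‖ = lam k} < ⊤)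
    (hHlim : Tendsto (fun k => ENNReal.ofReal (lam k) *
        μH[1] {x : V2 | x ∈ ball (0 : V2) l \ {0} ∧ ‖u k x - vortex x‖ = lam k})
      atTop (𝓝 0))
    (D : ℕ → Set V2)
    (hD : ∀ k, D k = {x : V2 | x ∈ ball (0 : V2) l \ {0} ∧ lam k < ‖u k x - vortex x‖})
    (ζ : V2 → ℝ) (hζmeas : Measurable ζ) (hζmem : ∀ x, ζ x ∈ Set.Icc (0 : ℝ) 1)
    (hconv : ∀ g : V2 → ℝ, Integrable g (volume.restrict (ball (0 : V2) l)) →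
      Tendsto (fun k => ∫ x in D k, g x) atTop (𝓝 (∫ x in ball (0 : V2) l, ζ x * g x))) :
    ∀ φ : V2 × V2 → ℝ, ContDiff ℝ (⊤ : ℕ∞) φ → HasCompactSupport φ →
      tsupport φ ⊆ ball (0 : V2) l ×ˢ (Set.univ : Set V2) →
      (Tendsto (fun k => ∫ x in ball (0 : V2) l \ D k, φ (x, u k x)) atTop
        (𝓝 (∫ x in ball (0 : V2) l, φ (x, vortex x) * (1 - ζ x)))) ∧
      (∀ i j : Fin 2,
        Tendsto (fun k => ∫ x in ball (0 : V2) l \ D k,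
            φ (x, u k x) * fderiv ℝ (u k) x (EuclideanSpace.single i 1) j) atTop
          (𝓝 (∫ x in ball (0 : V2) l,
            φ (x, vortex x) * fderiv ℝ vortex x (EuclideanSpace.single i 1) j
              * (1 - ζ x)))) := by
  intro φ hφ hφc _
  obtain ⟨B, hB⟩ := hφc.exists_bound_of_continuous hφ.continuous
  obtain ⟨L, hL⟩ := hφ.lipschitzWith_of_hasCompactSupport hφc (by simp)
  have hres (s : Set V2) : volume.restrict (s \ {0}) = volume.restrict s :=
    Measure.restrict_congr_set (sdiff_null_ae_eq_self (measure_singleton 0))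
  have hgrad' : (⨆ k, ∫⁻ x in ball (0 : V2) l, ‖fderiv ℝ (u k) x‖ₑ) < ⊤ := by
    refine (iSup_mono fun k ↦ lintegral_mono fun x ↦ ?_).trans_lt hgrad
    rw [← ofReal_norm]
    exact ENNReal.ofReal_le_ofReal (norm_le_sqrt_frobSq _)
  have hgeneral := currents_Tk_converge_general (n := 1) (w := vortex)
    (isOpen_ball.sdiff isClosed_singleton) (isBounded_ball.subset Set.sdiff_subset)
    (by simpa using hausdorffMeasure_frontier_ball_diff_singleton_lt_top 0 0 l)
    (contDiffOn_normalize.mono fun x hx ↦ hx.2)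
    ((integrableOn_fderiv_normalize_ball (by simp) l).mono_set Set.sdiff_subset)
    (fun k x _ ↦ ⟨K k, _, self_mem_nhdsWithin, (hLip k).mono Set.sdiff_subset⟩)
    (by simpa only [hres] using hgrad') (fun k ↦ (hmem k).1.le) hlam0 (by simpa using hH)
    (by simpa using hHlim) hD hζmeas hζmem (by simpa only [IntegrableOn, hres] using hconv)
    (hφ.of_le (by simp)) hL hB
  simp only [sdiff_right_comm, hres] at hgeneral
  exact ⟨hgeneral.1, fun i j ↦ hgeneral.2 i (EuclideanSpace.proj j)⟩
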